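/- arXiv:2407.20593 — 2 statements merged into one kernel-verified Lean document; each statement's English description precedes it below -/
import Mathlib

section
/- Suppose the matrix X = X(A_1,…,A_{m/2}; A_{m+1}) ∈ M_{2n+1}(ℂ) has 2n+1 distinct eigenvalues (i.e., X is a regular semisimple, equivalently stable, element of the degree-one piece of the stable grading of order m = n on so_{2n+1}(ℂ): it has the simple eigenvalue 0 and 2n pairwise distinct nonzero eigenvalues). Then X₁ = X(A_1,…,A_{m/2}; 0) is nilpotent and rank(X₁^j) = max(1−j, 0) + max(n−1−j, 0) + max(n+1−j, 0) for all j ≥ 0; that is, the Jordan type of X₁ consists of one block of size 1, one of size n−1, and one of size n+1 (so exp(X₁) lies in the Richardson unipotent class u_P of SO_{2n+1} attached to the parahoric P of this grading). -/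
open Matrix

/-- Read off the `(p, q)` entry (0-based, natural-number indices) of a matrix,
returning `0` out of range. -/
noncomputable def fnOf {a b : ℕ} (B : Matrix (Fin a) (Fin b) ℂ) (p q : ℕ) : ℂ :=
  if h : p < a ∧ q < b then B ⟨p, h.1⟩ ⟨q, h.2⟩ else 0

/-- The `(i, j)` entry (0-based) of the matrix `X(A_1,…,A_{m/2}; A_{m+1}) ∈
M_{2n+1}(ℂ)` for the stable grading of order `m = n` on `so_{2n+1}(ℂ)`.
The block decomposition has row/column sizes `(1, 2, …, 2, 3, 2, …, 2, 1)`
(`m + 1` diagonal blocks), and the only possibly nonzero blocks are the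
superdiagonal blocks `A_1, A_2, …, A_{m/2}, −s·A_{m/2}ᵀ·s, …, −s·A_1ᵀ·s`,
the block `A_{m+1}` in block position `(m, 1)`, and the block
`−s·A_{m+1}ᵀ·s` in block position `(m+1, 2)` (1-based block positions).
Here `A1 = A_1` (1×2), `A i = A_i` for `2 ≤ i ≤ m/2 − 1` (2×2),
`Amid = A_{m/2}` (2×3) and `Alast = A_{m+1}` (2×1). -/
noncomputable def soEnt (n : ℕ) (A1 : Matrix (Fin 1) (Fin 2) ℂ)
    (A : ℕ → Matrix (Fin 2) (Fin 2) ℂ)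
    (Amid : Matrix (Fin 2) (Fin 3) ℂ) (Alast : Matrix (Fin 2) (Fin 1) ℂ)
    (i j : ℕ) : ℂ :=
  -- block (1,2): A_1
  if i = 0 ∧ 1 ≤ j ∧ j ≤ 2 then fnOf A1 0 (j - 1)
  -- blocks (r, r+1) for 2 ≤ r ≤ m/2 − 1 (1-based): A_r
  else if 1 ≤ i ∧ i ≤ n - 4 ∧ 2 * ((i + 1) / 2) + 1 ≤ j ∧ j ≤ 2 * ((i + 1) / 2) + 2 then
    fnOf (A ((i + 1) / 2 + 1)) (i + 1 - 2 * ((i + 1) / 2)) (j - (2 * ((i + 1) / 2) + 1))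
  -- block (m/2, m/2+1): A_{m/2}
  else if n - 3 ≤ i ∧ i ≤ n - 2 ∧ n - 1 ≤ j ∧ j ≤ n + 1 then
    fnOf Amid (i - (n - 3)) (j - (n - 1))
  -- block (m/2+1, m/2+2): −s·A_{m/2}ᵀ·s
  else if n - 1 ≤ i ∧ i ≤ n + 1 ∧ n + 2 ≤ j ∧ j ≤ n + 3 then
    -(fnOf Amid (n + 3 - j) (n + 1 - i))
  -- blocks (r, r+1) for m/2+2 ≤ r ≤ m−1 (1-based): −s·A_{m+1−r}ᵀ·s
  else if n + 2 ≤ i ∧ i ≤ 2 * n - 3 ∧ 2 * (i / 2) + 2 ≤ j ∧ j ≤ 2 * (i / 2) + 3 then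
    -(fnOf (A (n - i / 2)) (2 * (i / 2) + 3 - j) (2 * (i / 2) + 1 - i))
  -- block (m, m+1): −s·A_1ᵀ·s
  else if 2 * n - 2 ≤ i ∧ i ≤ 2 * n - 1 ∧ j = 2 * n then
    -(fnOf A1 0 (2 * n - 1 - i))
  -- block (m, 1): A_{m+1}
  else if 2 * n - 2 ≤ i ∧ i ≤ 2 * n - 1 ∧ j = 0 then
    fnOf Alast (i - (2 * n - 2)) 0
  -- block (m+1, 2): −s·A_{m+1}ᵀ·s
  else if i = 2 * n ∧ 1 ≤ j ∧ j ≤ 2 then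
    -(fnOf Alast (2 - j) 0)
  else 0

/-- The matrix `X(A_1,…,A_{m/2}; A_{m+1}) ∈ M_{2n+1}(ℂ)` (with `m = n` even). -/
noncomputable def soMat (n : ℕ) (A1 : Matrix (Fin 1) (Fin 2) ℂ)
    (A : ℕ → Matrix (Fin 2) (Fin 2) ℂ)
    (Amid : Matrix (Fin 2) (Fin 3) ℂ) (Alast : Matrix (Fin 2) (Fin 1) ℂ) :
    Matrix (Fin (2 * n + 1)) (Fin (2 * n + 1)) ℂ :=
  Matrix.of fun i j => soEnt n A1 A Amid Alast (i : ℕ) (j : ℕ)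

/-
Put the basis vectors of the `i`-th diagonal block in degree `i`, for `0 ≤ i ≤ n`. Then `X` lowers
degrees by one modulo `n`, and `X₁` is the part of `X` that does so without wrapping around. On
degrees that leave no room to wrap around, powers of `X₁` and `X` agree, and three Jordan chains of
`X₁` with independent ends come out of the spectrum of `X`:

* If `X₁ ^ n` killed the last basis vector, `X ^ n` would be triangular on the degree `0` piece
  modulo `n`, with equal diagonal entries since `X` is anti-symmetric about the anti-diagonal and
  `n` is even. Every nonzero eigenvalue of `X` would then be an `n`-th root of this entry, leaving
  at most `n + 1` distinct eigenvalues.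
* The degree `n / 2` piece has dimension `3` and the one below it dimension `2`, so `X₁` kills some
  nonzero `u` of degree `n / 2`, and so does `X`.
* The degree `n - 1` piece has dimension `2` and the degree `0` piece dimension `1`, so
  `X₁ ^ (n - 1)` kills some nonzero `w` of degree `n - 1`. But `X₁ ^ (n - 2)` does not, as otherwise
  `u` and `w` would be independent generalized eigenvectors of `X` for the simple eigenvalue `0`.

The chains have lengths `n + 1`, `1` and `n - 1`, which add up to the dimension `2 * n + 1`.
-/

section JordanChains

variable {K V κ : Type*} [DivisionRing K] [AddCommGroup V] [Module K V] [Fintype κ]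

lemma card_le_finrank_of_linearIndependent_of_mem [FiniteDimensional K V] {p : Submodule K V}
    {v : κ → V} (hv : LinearIndependent K v) (hp : ∀ k, v k ∈ p) :
    Fintype.card κ ≤ Module.finrank K p :=
  (finrank_span_eq_card hv).symm.trans_le
    (Submodule.finrank_mono (Submodule.span_le.2 (Set.range_subset_iff.2 hp)))

lemma finrank_range_pow_eq_add_finrank_ker_inf_range [FiniteDimensional K V]
    (f : Module.End K V) (j : ℕ) :
    Module.finrank K (f ^ j).range =
      Module.finrank K (f ^ (j + 1)).range + Module.finrank K ↥(f.ker ⊓ (f ^ j).range) := by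
  have h := (f.domRestrict (f ^ j).range).finrank_range_add_finrank_ker
  rw [LinearMap.range_domRestrict, LinearMap.ker_domRestrict, ← LinearMap.range_comp,
    ← Module.End.mul_eq_comp, ← pow_succ'] at h
  rw [← h, inf_comm, ← Submodule.map_comap_subtype, Submodule.finrank_map_subtype_eq]

lemma card_le_finrank_ker_inf_range [FiniteDimensional K V] {f : Module.End K V} {ℓ : κ → ℕ}
    {v : κ → V} (hker : ∀ k, f ((f ^ ℓ k) (v k)) = 0)
    (hind : LinearIndependent K fun k => (f ^ ℓ k) (v k)) (j : ℕ) :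
    (Finset.univ.filter fun k => j ≤ ℓ k).card ≤
      Module.finrank K ↥(f.ker ⊓ (f ^ j).range) := by
  rw [← Fintype.card_subtype]
  refine card_le_finrank_of_linearIndependent_of_mem
    (hind.comp (Subtype.val : {k // j ≤ ℓ k} → κ) Subtype.val_injective) fun ⟨k, hk⟩ =>
      ⟨hker k, (f ^ (ℓ k - j)) (v k), ?_⟩
  rw [← Module.End.mul_apply, ← pow_add, Nat.add_sub_cancel' hk]
  rfl

lemma sum_succ_sub_eq_add_card_filter (ℓ : κ → ℕ) (j : ℕ) :
    ∑ k, (ℓ k + 1 - j) =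
      ∑ k, (ℓ k + 1 - (j + 1)) + (Finset.univ.filter fun k => j ≤ ℓ k).card := by
  rw [Finset.card_filter, ← Finset.sum_add_distrib]
  refine Finset.sum_congr rfl fun k _ => ?_
  split_ifs <;> omega

theorem finrank_range_pow_eq_sum_of_jordanChains [FiniteDimensional K V] {f : Module.End K V}
    {ℓ : κ → ℕ} {v : κ → V} (hker : ∀ k, f ((f ^ ℓ k) (v k)) = 0)
    (hind : LinearIndependent K fun k => (f ^ ℓ k) (v k))
    (hdim : Module.finrank K V = ∑ k, (ℓ k + 1)) (j : ℕ) :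
    Module.finrank K (f ^ j).range = ∑ k, (ℓ k + 1 - j) := by
  -- The excess of the left side over the right is antitone in `j`, starts at `0`, and is
  -- eventually nonnegative, so it vanishes identically.
  set excess : ℕ → ℤ := fun j => Module.finrank K (f ^ j).range - (∑ k, (ℓ k + 1 - j) : ℕ)
  have excess_antitone : Antitone excess := antitone_nat_of_succ_le fun j => by
    have hrange := finrank_range_pow_eq_add_finrank_ker_inf_range f j
    have hcard := card_le_finrank_ker_inf_range hker hind j
    have hsum := sum_succ_sub_eq_add_card_filter ℓ j
    simp only [excess]
    omega
  have excess_zero : excess 0 = 0 := by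
    have hrange : Module.finrank K (f ^ 0).range = ∑ k, (ℓ k + 1) := by
      rw [pow_zero, Module.End.one_eq_id, LinearMap.range_id, finrank_top, hdim]
    simp only [excess, hrange, Nat.sub_zero, sub_self]
  have excess_nonneg : 0 ≤ excess (j + ∑ k, (ℓ k + 1)) := by
    have hsum : ∑ k, (ℓ k + 1 - (j + ∑ k, (ℓ k + 1))) = 0 :=
      Finset.sum_eq_zero fun k hk => by
        have := Finset.single_le_sum (f := fun k => ℓ k + 1) (fun _ _ => Nat.zero_le _) hk
        omega
    simp only [excess, hsum]
    omega
  have hle := excess_antitone (Nat.zero_le j)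
  have hge := excess_antitone (Nat.le_add_right j (∑ k, (ℓ k + 1)))
  simp only [excess] at hle hge excess_zero excess_nonneg
  omega

end JordanChains

section LinearSystems

variable {K ι : Type*} [Field K] [Fintype ι]

lemma rank_pow_eq_sum_of_jordanChains {κ : Type*} [Fintype κ] [DecidableEq ι]
    {N : Matrix ι ι K} {ℓ : κ → ℕ} {v : κ → ι → K} (hker : ∀ k, N ^ (ℓ k + 1) *ᵥ v k = 0)
    (hind : LinearIndependent K fun k => N ^ ℓ k *ᵥ v k)
    (hdim : Fintype.card ι = ∑ k, (ℓ k + 1)) (j : ℕ) :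
    (N ^ j).rank = ∑ k, (ℓ k + 1 - j) := by
  have hpow (i : ℕ) (w : ι → K) : (N.toLin' ^ i) w = N ^ i *ᵥ w := by
    rw [← Matrix.toLin'_pow, Matrix.toLin'_apply]
  rw [Matrix.rank, ← Matrix.toLin'_apply', Matrix.toLin'_pow]
  refine finrank_range_pow_eq_sum_of_jordanChains (v := v) (fun k => ?_) ?_ ?_ j
  · rw [hpow, Matrix.toLin'_apply, Matrix.mulVec_mulVec, ← pow_succ', hker]
  · simpa only [hpow] using hind
  · rw [Module.finrank_fintype_fun_eq_card, hdim]

lemma not_linearIndependent_of_pow_mulVec_eq_zero [DecidableEq ι] {X : Matrix ι ι K}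
    (hX : X.charpoly.rootMultiplicity 0 ≤ 1) {k : ℕ} {v : Fin 2 → ι → K}
    (hv : ∀ i, X ^ k *ᵥ v i = 0) : ¬ LinearIndependent K v := by
  intro hind
  have hmem (i : Fin 2) : v i ∈ Module.End.maxGenEigenspace (Matrix.toLin' X) 0 := by
    rw [Module.End.mem_maxGenEigenspace]
    exact ⟨k, by rw [zero_smul, sub_zero, ← Matrix.toLin'_pow, Matrix.toLin'_apply, hv]⟩
  have hcard := card_le_finrank_of_linearIndependent_of_mem hind hmem
  rw [LinearMap.finrank_maxGenEigenspace_eq, Matrix.charpoly_toLin', Fintype.card_fin] at hcard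
  omega

lemma exists_ne_zero_supported_mulVec_eq_zero (M : Matrix ι ι K) {s t : Finset ι}
    (hst : t.card < s.card) :
    ∃ v : ι → K, v ≠ 0 ∧ (∀ i, v i ≠ 0 → i ∈ s) ∧ ∀ i ∈ t, (M *ᵥ v) i = 0 := by
  classical
  let L : (ι → K) →ₗ[K] ({i // i ∉ s} → K) × (t → K) :=
    (LinearMap.funLeft K K Subtype.val).prod (LinearMap.funLeft K K Subtype.val ∘ₗ M.mulVecLin)
  have hL : L.ker ≠ ⊥ := LinearMap.ker_ne_bot_of_finrank_lt <| by
    have hs := s.card_le_univ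
    rw [Module.finrank_prod, Module.finrank_fintype_fun_eq_card, Module.finrank_fintype_fun_eq_card,
      Module.finrank_fintype_fun_eq_card, Fintype.card_coe, Fintype.card_subtype_compl,
      Fintype.card_coe]
    omega
  obtain ⟨v, hv, hv0⟩ := Submodule.exists_mem_ne_zero_of_ne_bot hL
  rw [LinearMap.mem_ker, Prod.ext_iff] at hv
  exact ⟨v, hv0, fun i hi => not_not.1 fun his => hi (congrFun hv.1 ⟨i, his⟩),
    fun i hi => congrFun hv.2 ⟨i, hi⟩⟩

end LinearSystems

section MatrixPowers

variable {R ι : Type*} [CommRing R] [Fintype ι] [DecidableEq ι]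

lemma exists_mulVec_eq_smul_of_mem_roots_charpoly [IsDomain R] {X : Matrix ι ι R} {μ : R}
    (hμ : μ ∈ X.charpoly.roots) : ∃ v ≠ 0, X *ᵥ v = μ • v := by
  have hroot := Polynomial.isRoot_of_mem_roots hμ
  rw [Polynomial.IsRoot, Matrix.eval_charpoly, ← Matrix.exists_mulVec_eq_zero_iff] at hroot
  obtain ⟨v, hv, h⟩ := hroot
  refine ⟨v, hv, ?_⟩
  rw [Matrix.sub_mulVec, sub_eq_zero] at h
  simpa using h.symm

lemma pow_mulVec_eq_smul {X : Matrix ι ι R} {μ : R} {v : ι → R} (hv : X *ᵥ v = μ • v) (k : ℕ) :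
    X ^ k *ᵥ v = μ ^ k • v := by
  induction k with
  | zero => simp
  | succ k ih => rw [pow_succ', ← Matrix.mulVec_mulVec, ih, Matrix.mulVec_smul, hv, smul_smul,
      pow_succ]

lemma pow_apply_eq_of_reindex_transpose_eq_neg {X : Matrix ι ι R} {e : ι ≃ ι}
    (hX : (Matrix.reindexAlgEquiv R R e X)ᵀ = -X) {k : ℕ} (hk : Even k) (i j : ι) :
    (X ^ k) (e.symm j) (e.symm i) = (X ^ k) i j := by
  have h : (Matrix.reindexAlgEquiv R R e (X ^ k))ᵀ = X ^ k := by
    rw [map_pow, Matrix.transpose_pow, hX, hk.neg_pow]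
  exact congrFun₂ h i j

end MatrixPowers

section CyclicGrading

variable {ι : Type*} {g : ι → ℕ}

/-- The vector `v` lies in the degree `r` piece of the grading in which the `i`-th basis vector
has degree `g i`. -/
def IsHomogeneousVector {R : Type*} [Zero R] (g : ι → ℕ) (r : ℕ) (v : ι → R) : Prop :=
  ∀ i, v i ≠ 0 → g i = r

/-- The entries of `X` take degree `d + 1` to degree `d`, and may also take degree `d` to degree
`d + n - 1`: `X` is homogeneous of degree `-1` modulo `n`. For `n = 0` this is homogeneity for the
`ℕ`-grading itself. -/
def IsCyclicallyGraded {R : Type*} [Zero R] (g : ι → ℕ) (n : ℕ) (X : Matrix ι ι R) : Prop :=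
  ∀ i j, X i j ≠ 0 → g j = g i + 1 ∨ g j + n = g i + 1

/-- The part of `X` that lowers degrees by exactly one, i.e. without the wrap-around entries. -/
def gradedPart {R : Type*} [Zero R] (g : ι → ℕ) (X : Matrix ι ι R) : Matrix ι ι R :=
  Matrix.of fun i j => if g j = g i + 1 then X i j else 0

lemma isCyclicallyGraded_gradedPart {R : Type*} [Zero R] (g : ι → ℕ) (X : Matrix ι ι R) :
    IsCyclicallyGraded g 0 (gradedPart g X) := by
  intro i j h
  simp only [gradedPart, Matrix.of_apply] at h
  exact Or.inl (of_not_not fun hij => h (if_neg hij))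

lemma linearIndependent_of_isHomogeneousVector {R κ : Type*} [Ring R] [NoZeroDivisors R]
    {r : κ → ℕ} (hr : Function.Injective r) {v : κ → ι → R} (hv0 : ∀ k, v k ≠ 0)
    (hv : ∀ k, IsHomogeneousVector g (r k) (v k)) : LinearIndependent R v := by
  classical
  rw [linearIndependent_iff']
  intro s c hc k hk
  obtain ⟨i, hi⟩ := Function.ne_iff.1 (hv0 k)
  have hzero (l : κ) (hl : l ≠ k) : v l i = 0 :=
    of_not_not fun hli => hl (hr ((hv l i hli).symm.trans (hv k i hi)))
  have hsum := congrFun hc i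
  rw [Finset.sum_apply, Finset.sum_eq_single_of_mem k hk fun l _ hl => by simp [hzero l hl]] at hsum
  exact (mul_eq_zero.1 hsum).resolve_right hi

variable {R : Type*} [Semiring R] [Fintype ι] [DecidableEq ι] {n : ℕ} {X : Matrix ι ι R}

lemma IsCyclicallyGraded.exists_of_pow_apply_ne_zero (hX : IsCyclicallyGraded g n X) {k : ℕ}
    {i j : ι} (h : (X ^ k) i j ≠ 0) : ∃ t, g j + n * t = g i + k := by
  induction k generalizing i with
  | zero =>
    obtain rfl : i = j := of_not_not fun hij => h (Matrix.one_apply_ne hij)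
    exact ⟨0, by simp⟩
  | succ k ih =>
    rw [pow_succ', Matrix.mul_apply] at h
    obtain ⟨l, -, hl⟩ := Finset.exists_ne_zero_of_sum_ne_zero h
    obtain ⟨t, ht⟩ := ih (right_ne_zero_of_mul hl)
    obtain hil | hil := hX i l (left_ne_zero_of_mul hl)
    · exact ⟨t, by omega⟩
    · exact ⟨t + 1, by rw [mul_add]; omega⟩

lemma IsCyclicallyGraded.dvd_of_pow_apply_ne_zero (hX : IsCyclicallyGraded g n X) {i j : ι}
    {k : ℕ} (hi : n ∣ g i + k) (h : (X ^ k) i j ≠ 0) : n ∣ g j := by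
  obtain ⟨t, ht⟩ := hX.exists_of_pow_apply_ne_zero h
  exact (Nat.dvd_add_left (dvd_mul_right n t)).1 (ht ▸ hi)

lemma IsHomogeneousVector.eq_of_pow_mulVec_apply_ne_zero (hX : IsCyclicallyGraded g 0 X) {r : ℕ}
    {v : ι → R} (hv : IsHomogeneousVector g r v) {k : ℕ} {i : ι} (h : (X ^ k *ᵥ v) i ≠ 0) :
    r = g i + k := by
  obtain ⟨j, -, hj⟩ := Finset.exists_ne_zero_of_sum_ne_zero h
  obtain ⟨t, ht⟩ := hX.exists_of_pow_apply_ne_zero (left_ne_zero_of_mul hj)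
  have := hv j (right_ne_zero_of_mul hj)
  omega

lemma IsHomogeneousVector.pow_mulVec (hX : IsCyclicallyGraded g 0 X) {r k : ℕ} {v : ι → R}
    (hv : IsHomogeneousVector g (r + k) v) : IsHomogeneousVector g r (X ^ k *ᵥ v) := by
  intro i hi
  have := hv.eq_of_pow_mulVec_apply_ne_zero hX hi
  omega

lemma IsCyclicallyGraded.pow_eq_zero (hX : IsCyclicallyGraded g 0 X) (hg : ∀ i, g i ≤ n) :
    X ^ (n + 1) = 0 := by
  ext i j
  by_contra h
  obtain ⟨t, ht⟩ := hX.exists_of_pow_apply_ne_zero h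
  have := hg j
  omega

/-- A path of `k` steps of `X` from `i` to `j` that wraps around gains at least `n` over the
degree difference, so none exists below that threshold. -/
lemma IsCyclicallyGraded.gradedPart_pow_apply (hX : IsCyclicallyGraded g n X) {k : ℕ} {i j : ι}
    (h : g i + k < g j + n) : (gradedPart g X ^ k) i j = (X ^ k) i j := by
  induction k generalizing i with
  | zero => simp
  | succ k ih =>
    rw [pow_succ', pow_succ', Matrix.mul_apply, Matrix.mul_apply]
    refine Finset.sum_congr rfl fun l _ => ?_
    by_cases hil : g l = g i + 1
    · rw [gradedPart, Matrix.of_apply, if_pos hil, ← gradedPart, ih (by omega)]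
    · have hXl : X i l * (X ^ k) l j = 0 := by
        by_contra hne
        obtain ⟨t, ht⟩ := hX.exists_of_pow_apply_ne_zero (right_ne_zero_of_mul hne)
        have := (hX i l (left_ne_zero_of_mul hne)).resolve_left hil
        have := Nat.zero_le (n * t)
        omega
      rw [gradedPart, Matrix.of_apply, if_neg hil, zero_mul, hXl]

lemma IsCyclicallyGraded.gradedPart_pow_mulVec (hX : IsCyclicallyGraded g n X)
    (hg : ∀ i, g i ≤ n) {r k : ℕ} (hkr : k < r) {v : ι → R} (hv : IsHomogeneousVector g r v) :
    gradedPart g X ^ k *ᵥ v = X ^ k *ᵥ v := by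
  ext i
  refine Finset.sum_congr rfl fun j _ => ?_
  beta_reduce
  by_cases hj : v j = 0
  · rw [hj, mul_zero, mul_zero]
  · have := hv j hj
    have := hg i
    rw [hX.gradedPart_pow_apply (by omega)]

end CyclicGrading

section Corner

variable {R ι : Type*} [CommRing R] [IsDomain R] [Fintype ι] {g : ι → ℕ} {n : ℕ}
  {X : Matrix ι ι R}

lemma IsCyclicallyGraded.eigenvector_eq_zero (hX : IsCyclicallyGraded g n X)
    (hg : ∀ i, g i ≤ n) {μ : R} (hμ : μ ≠ 0) {v : ι → R} (hv : X *ᵥ v = μ • v)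
    (hv0 : ∀ i, n ∣ g i → v i = 0) : v = 0 := by
  classical
  ext i
  have hsum : (X ^ (n - g i) *ᵥ v) i = 0 := Finset.sum_eq_zero fun j _ => by
    beta_reduce
    by_cases hij : (X ^ (n - g i)) i j = 0
    · rw [hij, zero_mul]
    · have hj := hX.dvd_of_pow_apply_ne_zero (by rw [Nat.add_sub_cancel' (hg i)]) hij
      rw [hv0 j hj, mul_zero]
  rw [pow_mulVec_eq_smul hv] at hsum
  exact (mul_eq_zero.1 hsum).resolve_left (pow_ne_zero _ hμ)

/-- `X ^ n` acts on the degree `0` piece modulo `n`, spanned by the basis vectors `a` and `b`, as a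
triangular matrix with both diagonal entries equal. -/
lemma IsCyclicallyGraded.eigenvalue_pow_eq [DecidableEq ι] (hX : IsCyclicallyGraded g n X)
    (hg : ∀ i, g i ≤ n) {a b : ι} (hab : ∀ i, n ∣ g i ↔ i = a ∨ i = b)
    (hdiag : (X ^ n) a a = (X ^ n) b b) (hcorner : (X ^ n) a b = 0) {μ : R} (hμ : μ ≠ 0)
    {v : ι → R} (hv0 : v ≠ 0) (hv : X *ᵥ v = μ • v) : μ ^ n = (X ^ n) a a := by
  have hpow (i : ι) : (X ^ n *ᵥ v) i = μ ^ n * v i := congrFun (pow_mulVec_eq_smul hv n) i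
  have hdeg {i j : ι} (hi : n ∣ g i) (hja : j ≠ a) (hjb : j ≠ b) : (X ^ n) i j = 0 :=
    of_not_not fun h => ((hab j).1
      (hX.dvd_of_pow_apply_ne_zero ((Nat.dvd_add_left dvd_rfl).2 hi) h)).elim hja hjb
  by_cases hva : v a = 0
  · have hvb : v b ≠ 0 := fun hvb => hv0 <| hX.eigenvector_eq_zero hg hμ hv fun i hi => by
      obtain rfl | rfl := (hab i).1 hi <;> assumption
    have hrow : (X ^ n *ᵥ v) b = (X ^ n) b b * v b := Finset.sum_eq_single b (fun j _ hjb => by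
      beta_reduce
      obtain rfl | hja := eq_or_ne j a
      · rw [hva, mul_zero]
      · rw [hdeg ((hab b).2 (Or.inr rfl)) hja hjb, zero_mul]) (by simp)
    rw [hdiag]
    exact mul_right_cancel₀ hvb ((hpow b).symm.trans hrow)
  · have hrow : (X ^ n *ᵥ v) a = (X ^ n) a a * v a := Finset.sum_eq_single a (fun j _ hja => by
      beta_reduce
      obtain rfl | hjb := eq_or_ne j b
      · rw [hcorner, zero_mul]
      · rw [hdeg ((hab a).2 (Or.inl rfl)) hja hjb, zero_mul]) (by simp)
    exact mul_right_cancel₀ hva ((hpow a).symm.trans hrow)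

lemma IsCyclicallyGraded.pow_corner_ne_zero [DecidableEq ι] (hX : IsCyclicallyGraded g n X)
    (hg : ∀ i, g i ≤ n) (hn : 0 < n) {a b : ι} (hab : ∀ i, n ∣ g i ↔ i = a ∨ i = b)
    (hdiag : (X ^ n) a a = (X ^ n) b b) (hnodup : X.charpoly.roots.Nodup)
    (hcard : n + 1 < X.charpoly.roots.card) : (X ^ n) a b ≠ 0 := by
  intro hcorner
  have hroots : X.charpoly.roots ≤ 0 ::ₘ Polynomial.nthRoots n ((X ^ n) a a) := by
    rw [Multiset.le_iff_subset hnodup]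
    intro μ hμ
    obtain ⟨v, hv0, hv⟩ := exists_mulVec_eq_smul_of_mem_roots_charpoly hμ
    rw [Multiset.mem_cons, Polynomial.mem_nthRoots hn]
    exact or_iff_not_imp_left.2 fun hμ0 => hX.eigenvalue_pow_eq hg hab hdiag hcorner hμ0 hv0 hv
  have hle := Multiset.card_le_card hroots
  rw [Multiset.card_cons] at hle
  have := Polynomial.card_nthRoots n ((X ^ n) a a)
  omega

end Corner

section GradedJordanChains

variable {K ι : Type*} [Field K] [Fintype ι] [DecidableEq ι] {g : ι → ℕ} {n : ℕ}

lemma rank_pow_eq_sum_of_isHomogeneousVector {κ : Type*} [Fintype κ] {N : Matrix ι ι K}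
    (hN : IsCyclicallyGraded g 0 N) {ℓ r : κ → ℕ} (hr : Function.Injective r) {v : κ → ι → K}
    (hv : ∀ k, IsHomogeneousVector g (r k + ℓ k) (v k)) (hne : ∀ k, N ^ ℓ k *ᵥ v k ≠ 0)
    (hker : ∀ k, N ^ (ℓ k + 1) *ᵥ v k = 0) (hdim : Fintype.card ι = ∑ k, (ℓ k + 1)) (j : ℕ) :
    (N ^ j).rank = ∑ k, (ℓ k + 1 - j) :=
  rank_pow_eq_sum_of_jordanChains hker
    (linearIndependent_of_isHomogeneousVector hr hne fun k => (hv k).pow_mulVec hN) hdim j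

lemma IsCyclicallyGraded.exists_isHomogeneousVector_pow_mulVec_eq_zero {N : Matrix ι ι K}
    (hN : IsCyclicallyGraded g 0 N) {r k : ℕ}
    (h : (Finset.univ.filter fun i => g i = r).card <
      (Finset.univ.filter fun i => g i = r + k).card) :
    ∃ v ≠ 0, IsHomogeneousVector g (r + k) v ∧ N ^ k *ᵥ v = 0 := by
  obtain ⟨v, hv0, hs, ht⟩ := exists_ne_zero_supported_mulVec_eq_zero (N ^ k) h
  have hv : IsHomogeneousVector g (r + k) v := fun i hi => (Finset.mem_filter.1 (hs i hi)).2
  refine ⟨v, hv0, hv, funext fun i => of_not_not fun hi => hi (ht i ?_)⟩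
  exact Finset.mem_filter.2 ⟨Finset.mem_univ i, hv.pow_mulVec hN i hi⟩

lemma IsCyclicallyGraded.gradedPart_pow_mulVec_ne_zero {X : Matrix ι ι K}
    (hX : IsCyclicallyGraded g n X) (hg : ∀ i, g i ≤ n)
    (hroot : X.charpoly.rootMultiplicity 0 ≤ 1) {k l r s : ℕ} (hkr : k < r) (hls : l < s)
    (hkl : k ≤ l) (hrs : r ≠ s) {v w : ι → K} (hv0 : v ≠ 0) (hw0 : w ≠ 0)
    (hv : IsHomogeneousVector g r v) (hw : IsHomogeneousVector g s w)
    (hkv : gradedPart g X ^ k *ᵥ v = 0) : gradedPart g X ^ l *ᵥ w ≠ 0 := by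
  intro hlw
  rw [hX.gradedPart_pow_mulVec hg hkr hv] at hkv
  rw [hX.gradedPart_pow_mulVec hg hls hw] at hlw
  have hlv : X ^ l *ᵥ v = 0 := by
    rw [← Nat.sub_add_cancel hkl, pow_add, ← Matrix.mulVec_mulVec, hkv, Matrix.mulVec_zero]
  refine not_linearIndependent_of_pow_mulVec_eq_zero hroot (v := ![v, w]) (k := l)
    (Fin.forall_fin_two.2 ⟨hlv, hlw⟩) ?_
  refine linearIndependent_of_isHomogeneousVector (g := g) (r := ![r, s]) ?_
    (Fin.forall_fin_two.2 ⟨hv0, hw0⟩) (Fin.forall_fin_two.2 ⟨hv, hw⟩)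
  exact Function.Injective.of_eq_imp_le (by simp [Fin.forall_fin_two, hrs, hrs.symm])

end GradedJordanChains

section StableGrading

lemma card_filter_eq_of_forall_iff_mem_Icc {m a b : ℕ} {p : Fin m → Prop} [DecidablePred p]
    (hab : a ≤ b) (hb : b < m) (h : ∀ i : Fin m, p i ↔ a ≤ (i : ℕ) ∧ (i : ℕ) ≤ b) :
    (Finset.univ.filter p).card = b + 1 - a := by
  have hIcc : Finset.univ.filter p = Finset.Icc ⟨a, hab.trans_lt hb⟩ ⟨b, hb⟩ := by
    ext i
    rw [Finset.mem_filter_univ, h, Finset.mem_Icc, Fin.le_def, Fin.le_def]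
  rw [hIcc, Fin.card_Icc]

/-- For even `n`, the `0`-based index of the block of the decomposition
`(1, 2, …, 2, 3, 2, …, 2, 1)` of `{0, …, 2n}` that contains `i`; the block of size `3` is
`{n - 1, n, n + 1}`. -/
def blockIndex (n : ℕ) (i : Fin (2 * n + 1)) : ℕ :=
  if (i : ℕ) ≤ n then ((i : ℕ) + 1) / 2 else (i : ℕ) / 2

variable {n : ℕ}

lemma blockIndex_zero : blockIndex n 0 = 0 := by simp [blockIndex]

lemma blockIndex_last (hn : 0 < n) : blockIndex n (Fin.last (2 * n)) = n := by
  rw [blockIndex, Fin.val_last, if_neg (by omega)]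
  omega

lemma blockIndex_le (i : Fin (2 * n + 1)) : blockIndex n i ≤ n := by
  unfold blockIndex
  split_ifs <;> omega

lemma dvd_blockIndex_iff (hn : 2 ≤ n) (i : Fin (2 * n + 1)) :
    n ∣ blockIndex n i ↔ i = 0 ∨ i = Fin.last (2 * n) := by
  constructor
  · rintro ⟨t, ht⟩
    have hle := blockIndex_le i
    have ht : blockIndex n i = 0 ∨ blockIndex n i = n := by
      rcases t with _ | t
      · exact Or.inl ht
      · exact Or.inr (hle.antisymm (ht ▸ Nat.le_mul_of_pos_right n t.succ_pos))
    simp only [Fin.ext_iff, Fin.val_zero, Fin.val_last]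
    unfold blockIndex at ht
    split_ifs at ht <;> omega
  · rintro (rfl | rfl)
    · simp only [blockIndex_zero, dvd_zero]
    · rw [blockIndex_last (by omega)]

lemma card_blockIndex_eq_zero_lt (hn : 4 ≤ n) :
    (Finset.univ.filter fun i => blockIndex n i = 0).card <
      (Finset.univ.filter fun i => blockIndex n i = n - 1).card := by
  rw [card_filter_eq_of_forall_iff_mem_Icc (a := 0) (b := 0),
    card_filter_eq_of_forall_iff_mem_Icc (a := 2 * n - 2) (b := 2 * n - 1)]
  any_goals omega
  all_goals
    intro i
    unfold blockIndex
    split_ifs <;> omega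

lemma card_blockIndex_eq_half_sub_one_lt (hn : 4 ≤ n) (hne : Even n) :
    (Finset.univ.filter fun i => blockIndex n i = n / 2 - 1).card <
      (Finset.univ.filter fun i => blockIndex n i = n / 2).card := by
  obtain ⟨k, rfl⟩ := hne
  rw [card_filter_eq_of_forall_iff_mem_Icc (a := k + k - 3) (b := k + k - 2),
    card_filter_eq_of_forall_iff_mem_Icc (a := k + k - 1) (b := k + k + 1)]
  any_goals omega
  all_goals
    intro i
    unfold blockIndex
    split_ifs <;> omega

variable (A1 : Matrix (Fin 1) (Fin 2) ℂ) (A : ℕ → Matrix (Fin 2) (Fin 2) ℂ)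
  (Amid : Matrix (Fin 2) (Fin 3) ℂ) (Alast : Matrix (Fin 2) (Fin 1) ℂ)

lemma fnOf_zero {a b : ℕ} (p q : ℕ) : fnOf (0 : Matrix (Fin a) (Fin b) ℂ) p q = 0 := by
  simp [fnOf]

lemma isCyclicallyGraded_soMat (hn : 4 ≤ n) (hne : Even n) :
    IsCyclicallyGraded (blockIndex n) n (soMat n A1 A Amid Alast) := by
  intro i j h
  obtain ⟨k, rfl⟩ := hne
  contrapose! h
  unfold blockIndex at h
  rw [soMat, Matrix.of_apply]
  unfold soEnt
  split_ifs at h ⊢ <;> first | omega | simp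

lemma gradedPart_soMat (hn : 4 ≤ n) (hne : Even n) :
    gradedPart (blockIndex n) (soMat n A1 A Amid Alast) = soMat n A1 A Amid 0 := by
  ext ⟨i, hi⟩ ⟨j, hj⟩
  obtain ⟨k, rfl⟩ := hne
  simp only [gradedPart, soMat, Matrix.of_apply]
  by_cases hij : blockIndex (k + k) ⟨j, hj⟩ = blockIndex (k + k) ⟨i, hi⟩ + 1
  all_goals
    simp only [hij, if_true, if_false]
    simp only [blockIndex] at hij
    unfold soEnt
    simp only [fnOf_zero]
    split_ifs at hij ⊢ <;> first | rfl | omega | simp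

lemma isCyclicallyGraded_soMat_zero (hn : 4 ≤ n) (hne : Even n) :
    IsCyclicallyGraded (blockIndex n) 0 (soMat n A1 A Amid 0) := by
  rw [← gradedPart_soMat A1 A Amid 0 hn hne]
  exact isCyclicallyGraded_gradedPart _ _

lemma exists_isHomogeneousVector_half_mulVec_eq_zero (hn : 4 ≤ n) (hne : Even n) :
    ∃ v ≠ 0, IsHomogeneousVector (blockIndex n) (n / 2) v ∧ soMat n A1 A Amid 0 *ᵥ v = 0 := by
  have hhalf : n / 2 - 1 + 1 = n / 2 := by omega
  have h := (isCyclicallyGraded_soMat_zero A1 A Amid hn hne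
    ).exists_isHomogeneousVector_pow_mulVec_eq_zero (r := n / 2 - 1) (k := 1)
  rw [hhalf, pow_one] at h
  exact h (card_blockIndex_eq_half_sub_one_lt hn hne)

lemma soEnt_rev_of_add_lt (hn : 4 ≤ n) (hne : Even n) {i j i' j' : ℕ} (hi : i + i' = 2 * n)
    (hj : j + j' = 2 * n) (hij : i + j < 2 * n) :
    soEnt n A1 A Amid Alast j' i' = -soEnt n A1 A Amid Alast i j := by
  obtain ⟨k, rfl⟩ := hne
  -- The blocks of `soEnt` lying above the anti-diagonal are `A_1`, the `A_r` with `2 ≤ r ≤ m/2`,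
  -- and the corner block `A_{m+1}`; each is matched with its negated mirror image.
  rw [soEnt, if_neg (by omega), if_neg (by omega), if_neg (by omega), soEnt]
  by_cases hfirst : i = 0 ∧ 1 ≤ j ∧ j ≤ 2
  · rw [if_neg (by omega), if_neg (by omega), if_pos (by omega), if_pos hfirst]
    grind
  rw [if_neg hfirst]
  by_cases hinner : 1 ≤ i ∧ i ≤ k + k - 4 ∧ 2 * ((i + 1) / 2) + 1 ≤ j ∧ j ≤ 2 * ((i + 1) / 2) + 2
  · rw [if_neg (by omega), if_pos (by omega), if_pos hinner]
    grind
  rw [if_neg hinner]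
  by_cases hmid : k + k - 3 ≤ i ∧ i ≤ k + k - 2 ∧ k + k - 1 ≤ j ∧ j ≤ k + k + 1
  · rw [if_pos (by omega), if_pos hmid]
    grind
  rw [if_neg (by omega), if_neg (by omega), if_neg (by omega), if_neg (by omega), if_neg hmid]
  by_cases hcorner : 2 * (k + k) - 2 ≤ i ∧ i ≤ 2 * (k + k) - 1 ∧ j = 0
  · rw [if_pos (by omega), if_neg (by omega), if_neg (by omega), if_neg (by omega), if_pos hcorner]
    grind
  · rw [if_neg (by omega), if_neg (by omega), if_neg (by omega), if_neg (by omega),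
      if_neg hcorner, if_neg (by omega), neg_zero]

lemma soEnt_rev (hn : 4 ≤ n) (hne : Even n) {i j i' j' : ℕ} (hi : i + i' = 2 * n)
    (hj : j + j' = 2 * n) :
    soEnt n A1 A Amid Alast j' i' = -soEnt n A1 A Amid Alast i j := by
  rcases lt_trichotomy (i + j) (2 * n) with hlt | heq | hgt
  · exact soEnt_rev_of_add_lt A1 A Amid Alast hn hne hi hj hlt
  · obtain ⟨k, rfl⟩ := hne
    obtain rfl : j' = i := by omega
    obtain rfl : i' = j := by omega
    have hzero : soEnt (k + k) A1 A Amid Alast j' i' = 0 := by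
      unfold soEnt
      iterate 8 rw [if_neg (by omega)]
    rw [hzero, neg_zero]
  · rw [soEnt_rev_of_add_lt A1 A Amid Alast hn hne (i := j') (j := i') (i' := j) (j' := i)
      (by omega) (by omega) (by omega), neg_neg]

lemma reindex_transpose_soMat (hn : 4 ≤ n) (hne : Even n) :
    (Matrix.reindexAlgEquiv ℂ ℂ Fin.revPerm (soMat n A1 A Amid Alast))ᵀ =
      -soMat n A1 A Amid Alast := by
  ext i j
  have hrev (a : Fin (2 * n + 1)) : (a : ℕ) + (a.rev : ℕ) = 2 * n := by
    rw [Fin.val_rev]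
    omega
  exact soEnt_rev A1 A Amid Alast hn hne (hrev i) (hrev j)

variable {A1 A Amid Alast}

lemma soMat_zero_pow_apply_zero_last_ne_zero (hn : 4 ≤ n) (hne : Even n)
    (hdist : (soMat n A1 A Amid Alast).charpoly.roots.Nodup)
    (hcard : n + 1 < (soMat n A1 A Amid Alast).charpoly.roots.card) :
    (soMat n A1 A Amid 0 ^ n) 0 (Fin.last (2 * n)) ≠ 0 := by
  have hX := isCyclicallyGraded_soMat A1 A Amid Alast hn hne
  have hdiag := pow_apply_eq_of_reindex_transpose_eq_neg
    (reindex_transpose_soMat A1 A Amid Alast hn hne) hne (Fin.last (2 * n)) (Fin.last (2 * n))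
  rw [Fin.revPerm_symm, Fin.revPerm_apply, Fin.rev_last] at hdiag
  rw [← gradedPart_soMat A1 A Amid Alast hn hne, hX.gradedPart_pow_apply
    (by rw [blockIndex_zero, blockIndex_last (by omega)]; omega)]
  exact hX.pow_corner_ne_zero blockIndex_le (by omega) (dvd_blockIndex_iff (by omega)) hdiag
    hdist hcard

lemma exists_isHomogeneousVector_last_pow_mulVec_ne_zero (hn : 4 ≤ n) (hne : Even n)
    (hdist : (soMat n A1 A Amid Alast).charpoly.roots.Nodup)
    (hcard : n + 1 < (soMat n A1 A Amid Alast).charpoly.roots.card) :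
    ∃ v, IsHomogeneousVector (blockIndex n) n v ∧ soMat n A1 A Amid 0 ^ n *ᵥ v ≠ 0 := by
  refine ⟨Pi.single (Fin.last (2 * n)) 1, fun i hi => ?_, fun h => ?_⟩
  · obtain rfl : i = Fin.last (2 * n) := of_not_not fun h => hi (Pi.single_eq_of_ne h 1)
    exact blockIndex_last (by omega)
  · rw [Matrix.mulVec_single_one] at h
    exact soMat_zero_pow_apply_zero_last_ne_zero hn hne hdist hcard (congrFun h 0)

lemma exists_isHomogeneousVector_pred_pow_mulVec_ne_zero (hn : 4 ≤ n) (hne : Even n)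
    (hroot : (soMat n A1 A Amid Alast).charpoly.rootMultiplicity 0 ≤ 1) :
    ∃ v, IsHomogeneousVector (blockIndex n) (n - 1) v ∧ soMat n A1 A Amid 0 ^ (n - 2) *ᵥ v ≠ 0 ∧
      soMat n A1 A Amid 0 ^ (n - 1) *ᵥ v = 0 := by
  have hker := (isCyclicallyGraded_soMat_zero A1 A Amid hn hne
    ).exists_isHomogeneousVector_pow_mulVec_eq_zero (r := 0) (k := n - 1)
  rw [zero_add] at hker
  obtain ⟨w, hw0, hw, hNw⟩ := hker (card_blockIndex_eq_zero_lt hn)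
  obtain ⟨u, hu0, hu, hNu⟩ := exists_isHomogeneousVector_half_mulVec_eq_zero A1 A Amid hn hne
  refine ⟨w, hw, ?_, hNw⟩
  rw [← gradedPart_soMat A1 A Amid Alast hn hne] at hNu ⊢
  exact (isCyclicallyGraded_soMat A1 A Amid Alast hn hne).gradedPart_pow_mulVec_ne_zero
    blockIndex_le hroot (k := 1) (by omega) (by omega) (by omega) (by omega) hu0 hw0 hu hw
    (by rwa [pow_one])

end StableGrading

/-- Suppose `X = X(A_1,…,A_{m/2}; A_{m+1}) ∈ M_{2n+1}(ℂ)` has `2n+1` pairwise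
distinct eigenvalues (i.e. its characteristic polynomial has `2n+1` distinct
roots; this says `X` is a regular semisimple, equivalently stable, element of
the degree-one piece of the order `m = n` stable grading on `so_{2n+1}(ℂ)`).
Then `X₁ = X(A_1,…,A_{m/2}; 0)` is nilpotent and
`rank(X₁^j) = max(1−j,0) + max(n−1−j,0) + max(n+1−j,0)` for all `j`; i.e. the
Jordan type of `X₁` is one block of size 1, one of size n−1, and one of size
n+1 (so `exp(X₁)` lies in the Richardson class `u_P`). -/
theorem stmt5 (n : ℕ) (hn : 4 ≤ n) (hne : Even n)
    (A1 : Matrix (Fin 1) (Fin 2) ℂ) (A : ℕ → Matrix (Fin 2) (Fin 2) ℂ)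
    (Amid : Matrix (Fin 2) (Fin 3) ℂ) (Alast : Matrix (Fin 2) (Fin 1) ℂ)
    (hdist : (soMat n A1 A Amid Alast).charpoly.roots.Nodup)
    (hcard : (soMat n A1 A Amid Alast).charpoly.roots.card = 2 * n + 1) :
    IsNilpotent (soMat n A1 A Amid 0) ∧
      ∀ j : ℕ, (soMat n A1 A Amid 0 ^ j).rank
        = (1 - j) + (n - 1 - j) + (n + 1 - j) := by
  have hN := isCyclicallyGraded_soMat_zero A1 A Amid hn hne
  have hnil := hN.pow_eq_zero blockIndex_le
  have hroot : (soMat n A1 A Amid Alast).charpoly.rootMultiplicity 0 ≤ 1 := by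
    rw [← Polynomial.count_roots]
    exact Multiset.nodup_iff_count_le_one.1 hdist 0
  obtain ⟨e, he, hNe⟩ :=
    exists_isHomogeneousVector_last_pow_mulVec_ne_zero hn hne hdist (by omega)
  obtain ⟨w, hw, hNw, hNw'⟩ := exists_isHomogeneousVector_pred_pow_mulVec_ne_zero hn hne hroot
  obtain ⟨u, hu0, hu, hNu⟩ := exists_isHomogeneousVector_half_mulVec_eq_zero A1 A Amid hn hne
  refine ⟨⟨n + 1, hnil⟩, fun j => ?_⟩
  have hsub : n - 2 + 1 = n - 1 := by omega
  rw [rank_pow_eq_sum_of_isHomogeneousVector hN (r := ![0, 1, n / 2]) (ℓ := ![n, n - 2, 0])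
    (v := ![e, w, u])]
  · simp only [Fin.sum_univ_three, Matrix.cons_val, hsub]
    omega
  · intro a b
    fin_cases a <;> fin_cases b <;> simp <;> omega
  · simp [Fin.forall_fin_succ, he, hw, hu, add_comm 1, hsub]
  · simp [Fin.forall_fin_succ, hNe, hNw, hu0]
  · simp [Fin.forall_fin_succ, hnil, hNw', hNu, hsub]
  · simp only [Fintype.card_fin, Fin.sum_univ_three, Matrix.cons_val, hsub]
    omega
end

section
/- Let a₁, a₂, b₁, b₂ ∈ ℂ and let X = X((a₁ a₂), I₂, …, I₂, I_{2×3}; (b₁, b₂)ᵀ) ∈ M_{2n+1}(ℂ), i.e., the matrix X(A_1,…,A_{m/2}; A_{m+1}) with A_1 = (a₁ a₂), A_i = I₂ for 2 ≤ i ≤ m/2 − 1, A_{m/2} = I_{2×3}, and A_{m+1} = (b₁, b₂)ᵀ. Then det(λ·I_{2n+1} − X) = λ·(λ^{2n} + 2·(−1)^{n/2}·(a₁b₁ + a₂b₂)·λⁿ + (a₁b₁ − a₂b₂)²). -/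
open Matrix

/-!
Grade the coordinates by the index of their block modulo `n`. A nonzero entry of `X` leads from
degree `d` to degree `d + 1`, the blocks `A_{m+1}` and `−s·A_{m+1}ᵀ·s` being those that wrap around,
so `Xⁿ` preserves degrees.

For any matrix `M` of degree `1` in a grading by `ℤ/m`, let `S = ∑ λᵏ M^(m-1-k)`, so that
`(λ - M) * S = λᵐ - Mᵐ`. Replacing the columns of degree `0` of the identity by those of `S` gives a
matrix `U` for which both `U` and `(λ - M) * U` are block triangular, and comparing determinants
expresses the characteristic polynomial of `M`, up to a power of `λ`, by that of the degree-zero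
block of `Mᵐ` at `λᵐ`.

For the matrix in question the degree-zero block of `Xⁿ` is `2 × 2`, on the first and the last
coordinate. As all blocks but four are `±I₂` or `I_{2×3}` and its negated transpose, the coordinate
vectors are merely shifted along two chains, and the block can be read off.
-/

section BlockDeterminants

variable {ι R : Type*} [Fintype ι] [DecidableEq ι] [CommRing R]

lemma det_scalar_sub_of_strictBlockTriangular {α : Type*} [LinearOrder α] (b : ι → α)
    {N : Matrix ι ι R} (hN : ∀ i j, ¬ b i < b j → N i j = 0) (l : R) :
    (scalar ι l - N).det = l ^ Fintype.card ι := by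
  have htri : BlockTriangular (scalar ι l - N) b := fun i j hji => by
    rw [Matrix.sub_apply, hN i j hji.not_gt, sub_zero, scalar_apply,
      diagonal_apply_ne _ fun h => hji.ne (congrArg b h).symm]
  have hblock (a : α) : (scalar ι l - N).toSquareBlock b a = scalar {i // b i = a} l := by
    ext ⟨i, hi⟩ ⟨j, hj⟩
    simp [toSquareBlock_def, hN i j (by rw [hi, hj]; exact lt_irrefl a), diagonal_apply]
  calc (scalar ι l - N).det
      = ∏ a ∈ Finset.univ.image b, l ^ Fintype.card {i // b i = a} := by
        rw [htri.det]
        exact Finset.prod_congr rfl fun a _ => by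
          rw [hblock, scalar_apply, det_diagonal, Finset.prod_const, Finset.card_univ]
    _ = l ^ Fintype.card ι := by
        rw [Finset.prod_pow_eq_pow_sum, ← Finset.card_univ,
          Finset.card_eq_sum_card_image b Finset.univ]
        simp only [Fintype.card_subtype]

lemma det_mul_det_toSquareBlockProp (p : ι → Prop) [DecidablePred p] {N S : Matrix ι ι R}
    (hNS : ∀ i, ¬ p i → ∀ j, p j → (N * S) i j = 0) :
    N.det * (S.toSquareBlockProp p).det
      = ((N * S).toSquareBlockProp p).det * (N.toSquareBlockProp fun i => ¬ p i).det := by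
  let U : Matrix ι ι R := of fun i j => if p j then S i j else (1 : Matrix ι ι R) i j
  have hU_det : U.det = (S.toSquareBlockProp p).det := by
    have hcompl : (U.toSquareBlockProp fun i => ¬ p i) = 1 := by
      ext ⟨i, hi⟩ ⟨j, hj⟩
      simp [toSquareBlockProp_def, U, hj, one_apply]
    have hblock : U.toSquareBlockProp p = S.toSquareBlockProp p := by
      ext ⟨i, hi⟩ ⟨j, hj⟩
      simp [toSquareBlockProp_def, U, hj]
    rw [twoBlockTriangular_det' U p, hcompl, hblock, det_one, mul_one]
    intro i hi j hj
    simp [U, hj, one_apply_ne (show i ≠ j by rintro rfl; exact hj hi)]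
  have hNU (i j : ι) : (N * U) i j = if p j then (N * S) i j else N i j := by
    by_cases hj : p j <;> simp [mul_apply, U, hj, one_apply]
  rw [← hU_det, ← det_mul, twoBlockTriangular_det (N * U) p]
  · congr 2
    · ext ⟨i, hi⟩ ⟨j, hj⟩
      simp [toSquareBlockProp_def, hNU, hj]
    · ext ⟨i, hi⟩ ⟨j, hj⟩
      simp [toSquareBlockProp_def, hNU, hj]
  · intro i hi j hj
    rw [hNU, if_pos hj, hNS i hi j hj]

end BlockDeterminants

section Homogeneous

variable {ι A R : Type*}

/-- `M` is homogeneous of degree `d` for the grading of the index set by `g`: its `(i, j)` entry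
vanishes unless `g j = g i + d`, so that `M` shifts degrees by `d` when acting on row vectors. -/
def IsHomogeneousMatrix [Add A] [Zero R] (g : ι → A) (d : A) (M : Matrix ι ι R) : Prop :=
  ∀ i j, g j ≠ g i + d → M i j = 0

namespace IsHomogeneousMatrix

variable {g : ι → A} {d e : A}

lemma map [Add A] {S : Type*} [Zero R] [Zero S] {M : Matrix ι ι R}
    (hM : IsHomogeneousMatrix g d M) {f : R → S} (hf : f 0 = 0) :
    IsHomogeneousMatrix g d (M.map f) := by
  intro i j hij
  rw [map_apply, hM i j hij, hf]

variable [Fintype ι]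

lemma mul [AddSemigroup A] [NonUnitalNonAssocSemiring R] {M N : Matrix ι ι R}
    (hM : IsHomogeneousMatrix g d M) (hN : IsHomogeneousMatrix g e N) :
    IsHomogeneousMatrix g (d + e) (M * N) := by
  intro i j hij
  rw [mul_apply]
  refine Finset.sum_eq_zero fun k _ => ?_
  by_cases hik : g k = g i + d
  · rw [hN k j (by rwa [hik, add_assoc]), mul_zero]
  · rw [hM i k hik, zero_mul]

lemma pow [DecidableEq ι] [AddMonoid A] [Semiring R] {M : Matrix ι ι R}
    (hM : IsHomogeneousMatrix g d M) (k : ℕ) :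
    IsHomogeneousMatrix g (k • d) (M ^ k) := by
  induction k with
  | zero =>
    intro i j hij
    rw [pow_zero, one_apply_ne]
    rintro rfl
    simp at hij
  | succ k ih => simpa only [pow_succ, succ_nsmul] using ih.mul hM

end IsHomogeneousMatrix

end Homogeneous

section CyclicGrading

open Polynomial

lemma zmod_val_lt_val_add_one {m : ℕ} [NeZero m] {x : ZMod m} (hx : x + 1 ≠ 0) :
    x.val < (x + 1).val := by
  have hcast : x + 1 = ((x.val + 1 : ℕ) : ZMod m) := by simp
  have hlt : x.val + 1 < m := by
    refine lt_of_le_of_ne x.val_lt fun h => hx ?_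
    rw [hcast, h, ZMod.natCast_self]
  rw [hcast, ZMod.val_natCast_of_lt hlt]
  exact Nat.lt_succ_self _

variable {ι R : Type*} [Fintype ι] [DecidableEq ι] [CommRing R]

namespace IsHomogeneousMatrix

variable {m : ℕ} [NeZero m] {g : ι → ZMod m} {M : Matrix ι ι R}

lemma det_toSquareBlockProp_scalar_sub (hM : IsHomogeneousMatrix g 1 M) (l : R) :
    ((scalar ι l - M).toSquareBlockProp fun i => ¬ g i = 0).det
      = l ^ Fintype.card {i // ¬ g i = 0} := by
  rw [← det_scalar_sub_of_strictBlockTriangular (fun i : {i // ¬ g i = 0} => (g i).val)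
    (N := M.toSquareBlockProp fun i => ¬ g i = 0)]
  · congr 1
    ext i j
    simp [toSquareBlockProp_def, diagonal_apply, Subtype.ext_iff]
  · rintro ⟨i, hi⟩ ⟨j, hj⟩ hij
    refine hM i j fun h => hij ?_
    simpa only [h] using zmod_val_lt_val_add_one (h ▸ hj)

lemma geom_sum_apply_of_eq (hM : IsHomogeneousMatrix g 1 M) (l : R) {i j : ι} (hij : g i = g j) :
    (∑ k ∈ Finset.range m, scalar ι l ^ k * M ^ (m - 1 - k)) i j = scalar ι (l ^ (m - 1)) i j := by
  rw [Matrix.sum_apply, Finset.sum_eq_single_of_mem (m - 1)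
    (Finset.mem_range.2 (Nat.sub_one_lt (NeZero.ne m)))]
  · rw [Nat.sub_self, pow_zero, mul_one, map_pow]
  · intro k hk hkm
    have hdeg : ((m - 1 - k : ℕ) : ZMod m) ≠ 0 := by
      rw [Ne, ZMod.natCast_eq_zero_iff]
      have := Finset.mem_range.1 hk
      exact Nat.not_dvd_of_pos_of_lt (by omega) (by omega)
    rw [← map_pow, scalar_apply, diagonal_mul, hM.pow (m - 1 - k) i j, mul_zero]
    simpa [hij] using hdeg

theorem pow_mul_det_scalar_sub (hM : IsHomogeneousMatrix g 1 M) (l : R) :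
    l ^ ((m - 1) * Fintype.card {i // g i = 0}) * (scalar ι l - M).det
      = l ^ Fintype.card {i // ¬ g i = 0}
        * (scalar _ (l ^ m) - (M ^ m).toSquareBlockProp fun i => g i = 0).det := by
  let S := ∑ k ∈ Finset.range m, scalar ι l ^ k * M ^ (m - 1 - k)
  have htelescope : (scalar ι l - M) * S = scalar ι (l ^ m) - M ^ m := by
    rw [map_pow]
    exact (scalar_commute l (Commute.all l) M).mul_geom_sum₂ m
  have hS : (S.toSquareBlockProp fun i => g i = 0) = scalar _ (l ^ (m - 1)) := by
    ext ⟨i, hi⟩ ⟨j, hj⟩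
    refine (hM.geom_sum_apply_of_eq l (hi.trans hj.symm)).trans ?_
    simp [diagonal_apply]
  have hdet := det_mul_det_toSquareBlockProp (fun i => g i = 0) (N := scalar ι l - M) (S := S) <| by
    intro i hi j hj
    rw [htelescope, Matrix.sub_apply, hM.pow m i j (by simpa [hj] using Ne.symm hi), scalar_apply,
      diagonal_apply_ne _ (by rintro rfl; exact hi hj), sub_zero]
  have hblock : ((scalar ι (l ^ m) - M ^ m).toSquareBlockProp fun i => g i = 0)
      = scalar _ (l ^ m) - (M ^ m).toSquareBlockProp fun i => g i = 0 := by
    ext i j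
    simp [toSquareBlockProp_def, diagonal_apply, Subtype.ext_iff]
  rw [htelescope, hS, hblock, hM.det_toSquareBlockProp_scalar_sub,
    scalar_apply (n := {i // g i = 0}) (l ^ (m - 1)), det_diagonal,
    Finset.prod_const, Finset.card_univ, ← pow_mul] at hdet
  rw [mul_comm, hdet, mul_comm]

theorem pow_mul_charpoly (hM : IsHomogeneousMatrix g 1 M) :
    (X : R[X]) ^ ((m - 1) * Fintype.card {i // g i = 0}) * M.charpoly
      = X ^ Fintype.card {i // ¬ g i = 0}
        * expand R m ((M ^ m).toSquareBlockProp fun i => g i = 0).charpoly := by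
  have hC : IsHomogeneousMatrix g 1 (M.map C) := hM.map C_0
  rw [charpoly, charmatrix, RingHom.mapMatrix_apply, hC.pow_mul_det_scalar_sub, charpoly,
    AlgHom.map_det]
  congr 2
  ext i j : 1
  rw [← RingHom.mapMatrix_apply, ← map_pow]
  simp [toSquareBlockProp_def, charmatrix_apply, diagonal_apply, apply_ite]

end IsHomogeneousMatrix

end CyclicGrading

lemma vecMul_pow_of_forall_lt {ι R : Type*} [Fintype ι] [DecidableEq ι] [CommSemiring R]
    {M : Matrix ι ι R} {f : ℕ → ι → R} {r : R} {K : ℕ} (hf : ∀ k < K, f k ᵥ* M = r • f (k + 1)) :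
    f 0 ᵥ* M ^ K = r ^ K • f K := by
  induction K with
  | zero => simp
  | succ K ih =>
    rw [pow_succ, ← vecMul_vecMul, ih fun k hk => hf k (hk.trans K.lt_succ_self), smul_vecMul,
      hf K K.lt_succ_self, smul_smul, pow_succ]

section StableGrading

/-- The 0-based position of the block containing row `i` in the block decomposition
`(1, 2, …, 2, 3, 2, …, 2, 1)` of `soMat n`, for even `n`; the middle block of size `3` consists of
`n - 1`, `n`, `n + 1`. -/
def soBlock (n i : ℕ) : ℕ := if i ≤ n then (i + 1) / 2 else i / 2

lemma soBlock_modEq_of_soEnt_ne_zero {h i j : ℕ} {A1 : Matrix (Fin 1) (Fin 2) ℂ}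
    {A : ℕ → Matrix (Fin 2) (Fin 2) ℂ} {Amid : Matrix (Fin 2) (Fin 3) ℂ}
    {Alast : Matrix (Fin 2) (Fin 1) ℂ} (hh : 2 ≤ h)
    (hij : soEnt (2 * h) A1 A Amid Alast i j ≠ 0) :
    soBlock (2 * h) j ≡ soBlock (2 * h) i + 1 [MOD 2 * h] := by
  suffices hblock : soBlock (2 * h) j = soBlock (2 * h) i + 1 ∨
      soBlock (2 * h) j + 2 * h = soBlock (2 * h) i + 1 by
    rcases hblock with hsucc | hwrap
    · rw [hsucc]
    · rw [← hwrap]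
      exact (Nat.add_mod_right _ _).symm
  unfold soEnt at hij
  unfold soBlock
  split_ifs at hij
  all_goals first | exact absurd rfl hij | (split_ifs <;> omega)

/-- The grading of the rows of `soMat (2 * h)` by block position modulo the order `m = n = 2 * h`;
there are `m + 1` blocks, so the first and the last one both have degree `0`. -/
def soDegree (h : ℕ) (i : Fin (2 * (2 * h) + 1)) : ZMod (2 * h) := soBlock (2 * h) i

lemma isHomogeneousMatrix_soMat {h : ℕ} (hh : 2 ≤ h) (A1 : Matrix (Fin 1) (Fin 2) ℂ)
    (A : ℕ → Matrix (Fin 2) (Fin 2) ℂ) (Amid : Matrix (Fin 2) (Fin 3) ℂ)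
    (Alast : Matrix (Fin 2) (Fin 1) ℂ) :
    IsHomogeneousMatrix (soDegree h) 1 (soMat (2 * h) A1 A Amid Alast) := by
  intro i j hij
  contrapose! hij
  rw [soDegree, soDegree, ← Nat.cast_add_one, ZMod.natCast_eq_natCast_iff]
  exact soBlock_modEq_of_soEnt_ne_zero hh hij

lemma soDegree_eq_zero_iff {h : ℕ} (i : Fin (2 * (2 * h) + 1)) :
    soDegree h i = 0 ↔ i = 0 ∨ i = Fin.last _ := by
  have hle : soBlock (2 * h) i ≤ 2 * h := by unfold soBlock; split_ifs <;> omega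
  rw [soDegree, ZMod.natCast_eq_zero_iff, Fin.ext_iff, Fin.ext_iff, Fin.val_zero, Fin.val_last]
  constructor
  · intro hdvd
    rcases Nat.eq_zero_or_pos (soBlock (2 * h) i) with h0 | hpos
    · unfold soBlock at h0; split_ifs at h0 <;> omega
    · have := Nat.le_of_dvd hpos hdvd
      unfold soBlock at this; split_ifs at this <;> omega
  · rintro (hi | hi)
    · simp [soBlock, hi]
    · have : soBlock (2 * h) i = 2 * h := by unfold soBlock; split_ifs <;> omega
      simp [this]

/-- The degree-zero rows, listed as `0` and `2n` with `n = 2 * h`. -/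
noncomputable def soDegreeZeroEquiv {h : ℕ} (hh : 1 ≤ h) :
    Fin 2 ≃ {i : Fin (2 * (2 * h) + 1) // soDegree h i = 0} :=
  Equiv.ofBijective
    ![⟨0, (soDegree_eq_zero_iff _).2 (.inl rfl)⟩,
      ⟨Fin.last _, (soDegree_eq_zero_iff _).2 (.inr rfl)⟩] <| by
    have hne : (0 : Fin (2 * (2 * h) + 1)) ≠ Fin.last _ := by
      rw [Ne, Fin.ext_iff, Fin.val_zero, Fin.val_last]
      omega
    constructor
    · intro c d hcd
      fin_cases c <;> fin_cases d <;> simp_all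
    · rintro ⟨i, hi⟩
      rcases (soDegree_eq_zero_iff i).1 hi with rfl | rfl
      exacts [⟨0, rfl⟩, ⟨1, rfl⟩]

lemma soDegreeZeroEquiv_zero {h : ℕ} (hh : 1 ≤ h) : (soDegreeZeroEquiv hh 0).1 = 0 := rfl

lemma soDegreeZeroEquiv_one {h : ℕ} (hh : 1 ≤ h) : (soDegreeZeroEquiv hh 1).1 = Fin.last _ := rfl

lemma card_soDegree_eq_zero {h : ℕ} (hh : 1 ≤ h) :
    Fintype.card {i : Fin (2 * (2 * h) + 1) // soDegree h i = 0} = 2 := by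
  rw [← Fintype.card_congr (soDegreeZeroEquiv hh), Fintype.card_fin]

lemma fnOf_one (p q : ℕ) :
    fnOf (1 : Matrix (Fin 2) (Fin 2) ℂ) p q = if p = q ∧ p < 2 then 1 else 0 := by
  rcases p with _ | _ | p <;> rcases q with _ | _ | q <;> simp [fnOf]

lemma fnOf_mid (p q : ℕ) :
    fnOf (!![1, 0, 0; 0, 0, 1] : Matrix (Fin 2) (Fin 3) ℂ) p q
      = if (p = 0 ∧ q = 0) ∨ (p = 1 ∧ q = 2) then 1 else 0 := by
  rcases p with _ | _ | p <;> rcases q with _ | _ | _ | q <;> simp [fnOf]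

lemma fnOf_val {a b : ℕ} (B : Matrix (Fin a) (Fin b) ℂ) (p : Fin a) (q : Fin b) :
    fnOf B p q = B p q := dif_pos ⟨p.2, q.2⟩

/-- The `i`-th coordinate row vector of `ℂ ^ N`, indexed from `0`; it is zero when `N ≤ i`. Taking
`i` in `ℕ` keeps index arithmetic out of `Fin N`. -/
def coordVec (N i : ℕ) : Fin N → ℂ := fun j => if (j : ℕ) = i then 1 else 0

lemma coordVec_val_vecMul {N : ℕ} (M : Matrix (Fin N) (Fin N) ℂ) (i : Fin N) :
    coordVec N i ᵥ* M = M i := by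
  have : coordVec N i = Pi.single i 1 := by
    ext j
    simp [coordVec, Pi.single_apply, Fin.ext_iff]
  rw [this, single_one_vecMul, row_def]

lemma coordVec_vecMul_soMat_apply {n i : ℕ} (A1 : Matrix (Fin 1) (Fin 2) ℂ)
    (A : ℕ → Matrix (Fin 2) (Fin 2) ℂ) (Amid : Matrix (Fin 2) (Fin 3) ℂ)
    (Alast : Matrix (Fin 2) (Fin 1) ℂ) (hi : i < 2 * n + 1) (j : Fin (2 * n + 1)) :
    (coordVec (2 * n + 1) i ᵥ* soMat n A1 A Amid Alast) j = soEnt n A1 A Amid Alast i j :=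
  congrFun (coordVec_val_vecMul (soMat n A1 A Amid Alast) ⟨i, hi⟩) j

lemma coordVec_zero_vecMul_soMat {n : ℕ} (A1 : Matrix (Fin 1) (Fin 2) ℂ)
    (A : ℕ → Matrix (Fin 2) (Fin 2) ℂ) (Amid : Matrix (Fin 2) (Fin 3) ℂ)
    (Alast : Matrix (Fin 2) (Fin 1) ℂ) (hn : 4 ≤ n) :
    coordVec (2 * n + 1) 0 ᵥ* soMat n A1 A Amid Alast
      = ∑ c : Fin 2, A1 0 c • coordVec (2 * n + 1) (c + 1) := by
  ext j
  rw [coordVec_vecMul_soMat_apply _ _ _ _ (by omega)]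
  simp only [soEnt, coordVec, Fin.sum_univ_two, Pi.add_apply, Pi.smul_apply, smul_eq_mul,
    Fin.coe_ofNat_eq_mod]
  simp (disch := omega) only [if_neg]
  rcases (by omega : (j : ℕ) = 1 ∨ (j : ℕ) = 2 ∨ ¬ (1 ≤ (j : ℕ) ∧ (j : ℕ) ≤ 2)) with hj | hj | hj
  · simp [hj, fnOf]
  · simp [hj, fnOf]
  · simp (disch := omega) [if_neg, hj]

lemma coordVec_last_vecMul_soMat {n : ℕ} (A1 : Matrix (Fin 1) (Fin 2) ℂ)
    (A : ℕ → Matrix (Fin 2) (Fin 2) ℂ) (Amid : Matrix (Fin 2) (Fin 3) ℂ)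
    (Alast : Matrix (Fin 2) (Fin 1) ℂ) (hn : 4 ≤ n) :
    coordVec (2 * n + 1) (2 * n) ᵥ* soMat n A1 A Amid Alast
      = -∑ c : Fin 2, Alast c.rev 0 • coordVec (2 * n + 1) (c + 1) := by
  ext j
  rw [coordVec_vecMul_soMat_apply _ _ _ _ (by omega)]
  simp only [soEnt, coordVec, Fin.sum_univ_two, Pi.add_apply, Pi.smul_apply, smul_eq_mul,
    Fin.coe_ofNat_eq_mod, Pi.neg_apply]
  simp (disch := omega) only [if_neg]
  rcases (by omega : (j : ℕ) = 1 ∨ (j : ℕ) = 2 ∨ ¬ (1 ≤ (j : ℕ) ∧ (j : ℕ) ≤ 2)) with hj | hj | hj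
  · simp [hj, fnOf]
  · simp [hj, fnOf]
  · simp (disch := omega) [if_neg, hj]

lemma coordVec_penultimate_vecMul_soMat {n : ℕ} (A1 : Matrix (Fin 1) (Fin 2) ℂ)
    (A : ℕ → Matrix (Fin 2) (Fin 2) ℂ) (Amid : Matrix (Fin 2) (Fin 3) ℂ)
    (Alast : Matrix (Fin 2) (Fin 1) ℂ) (hn : 4 ≤ n) (c : Fin 2) :
    coordVec (2 * n + 1) (2 * n - 2 + c) ᵥ* soMat n A1 A Amid Alast
      = Alast c 0 • coordVec (2 * n + 1) 0 - A1 0 c.rev • coordVec (2 * n + 1) (2 * n) := by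
  ext j
  rw [coordVec_vecMul_soMat_apply _ _ _ _ (by omega)]
  have hsub : 2 * n - 2 + (c : ℕ) - (2 * n - 2) = c := by omega
  have hrev : 2 * n - 1 - (2 * n - 2 + (c : ℕ)) = c.rev := by rw [Fin.val_rev]; omega
  have hlast := fnOf_val Alast c 0
  have hfirst := fnOf_val A1 0 c.rev
  rw [Fin.val_zero] at hlast hfirst
  simp only [soEnt, coordVec, Pi.sub_apply, Pi.smul_apply, smul_eq_mul, hsub, hrev, hlast, hfirst]
  simp (disch := omega) only [if_neg]
  split_ifs <;> first | omega | simp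

section UnitBlocks

open Polynomial

/-- `X(A_1, I₂, …, I₂, I_{2×3}; A_{m+1})` with `m = n = 2 * h`. -/
noncomputable abbrev soUnitMat (h : ℕ) (A1 : Matrix (Fin 1) (Fin 2) ℂ)
    (Alast : Matrix (Fin 2) (Fin 1) ℂ) :
    Matrix (Fin (2 * (2 * h) + 1)) (Fin (2 * (2 * h) + 1)) ℂ :=
  soMat (2 * h) A1 (fun _ => 1) !![1, 0, 0; 0, 0, 1] Alast

/-- The row visited at time `k` by the `c`-th of the two chains along which the unit blocks of
`soUnitMat h` shift the coordinate vectors, from row `c + 1` of the second block to row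
`4 * h - 2 + c` of the last but one. The chains pass row `2 * h`, the middle one, on either
side. -/
def walkIdx (h : ℕ) (c : Fin 2) (k : ℕ) : ℕ := 2 * k + c + if h ≤ k + c then 2 else 1

variable {h : ℕ} (A1 : Matrix (Fin 1) (Fin 2) ℂ) (Alast : Matrix (Fin 2) (Fin 1) ℂ)

lemma coordVec_walkIdx_vecMul_of_lt {k : ℕ} (hk : k < h - 1) (c : Fin 2) :
    coordVec (2 * (2 * h) + 1) (walkIdx h c k) ᵥ* soUnitMat h A1 Alast
      = coordVec (2 * (2 * h) + 1) (walkIdx h c (k + 1)) := by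
  have hwalk : walkIdx h c k = 2 * k + c + 1 := by rw [walkIdx, if_neg (by omega)]
  ext j
  rw [hwalk, coordVec_vecMul_soMat_apply _ _ _ _ (by omega)]
  simp only [soEnt, fnOf_one, fnOf_mid, coordVec, walkIdx]
  simp (disch := omega) only [if_neg]
  split_ifs <;> first | rfl | omega

lemma coordVec_walkIdx_vecMul_of_le {k : ℕ} (hk : h - 1 ≤ k) (hk' : k < 2 * (h - 1)) (c : Fin 2) :
    coordVec (2 * (2 * h) + 1) (walkIdx h c k) ᵥ* soUnitMat h A1 Alast
      = -coordVec (2 * (2 * h) + 1) (walkIdx h c (k + 1)) := by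
  have hwalk : walkIdx h c (k + 1) = 2 * k + c + 4 := by rw [walkIdx, if_pos (by omega)]; ring
  ext j
  rw [hwalk, coordVec_vecMul_soMat_apply _ _ _ _ (by unfold walkIdx; split_ifs <;> omega)]
  simp only [soEnt, fnOf_one, fnOf_mid, coordVec, walkIdx, Pi.neg_apply]
  simp (disch := omega) only [if_neg]
  split_ifs <;> first | rfl | omega | simp

lemma coordVec_vecMul_soUnitMat_pow (hh : 2 ≤ h) (c : Fin 2) :
    coordVec (2 * (2 * h) + 1) (c + 1) ᵥ* soUnitMat h A1 Alast ^ (2 * h - 1)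
      = (-1 : ℂ) ^ (h - 1) • (Alast c 0 • coordVec (2 * (2 * h) + 1) 0
          - A1 0 c.rev • coordVec (2 * (2 * h) + 1) (2 * (2 * h))) := by
  have hstart : walkIdx h c 0 = c + 1 := by rw [walkIdx, if_neg (by omega)]; ring
  have hend : walkIdx h c (h - 1 + (h - 1)) = 2 * (2 * h) - 2 + c := by
    rw [walkIdx, if_pos (by omega)]
    omega
  have hleft := vecMul_pow_of_forall_lt (M := soUnitMat h A1 Alast) (r := 1) (K := h - 1)
    (f := fun k => coordVec _ (walkIdx h c k)) fun k hk => by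
      rw [one_smul, coordVec_walkIdx_vecMul_of_lt A1 Alast hk]
  have hright := vecMul_pow_of_forall_lt (M := soUnitMat h A1 Alast) (r := -1) (K := h - 1)
    (f := fun k => coordVec _ (walkIdx h c (h - 1 + k))) fun k hk => by
      rw [neg_one_smul, ← add_assoc,
        coordVec_walkIdx_vecMul_of_le A1 Alast (Nat.le_add_right _ _) (by omega)]
  have hexp : 2 * h - 1 = h - 1 + (h - 1) + 1 := by omega
  simp only [hstart, one_pow, one_smul] at hleft
  simp only [add_zero, hend] at hright
  rw [hexp, pow_succ, pow_add, ← vecMul_vecMul, ← vecMul_vecMul, hleft, hright, smul_vecMul,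
    coordVec_penultimate_vecMul_soMat _ _ _ _ (by omega)]

lemma coordVec_zero_vecMul_soUnitMat_pow (hh : 2 ≤ h) :
    coordVec (2 * (2 * h) + 1) 0 ᵥ* soUnitMat h A1 Alast ^ (2 * h)
      = (-1 : ℂ) ^ (h - 1) •
        ((A1 0 0 * Alast 0 0 + A1 0 1 * Alast 1 0) • coordVec (2 * (2 * h) + 1) 0
          - (2 * A1 0 0 * A1 0 1) • coordVec (2 * (2 * h) + 1) (2 * (2 * h))) := by
  rw [← mul_pow_sub_one (by omega : 2 * h ≠ 0), ← vecMul_vecMul,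
    coordVec_zero_vecMul_soMat _ _ _ _ (by omega), sum_vecMul]
  simp only [smul_vecMul, coordVec_vecMul_soUnitMat_pow A1 Alast hh, Fin.sum_univ_two,
    Fin.rev_zero, Fin.reduceLast, Fin.reduceRev]
  module

lemma coordVec_last_vecMul_soUnitMat_pow (hh : 2 ≤ h) :
    coordVec (2 * (2 * h) + 1) (2 * (2 * h)) ᵥ* soUnitMat h A1 Alast ^ (2 * h)
      = (-1 : ℂ) ^ (h - 1) •
        ((A1 0 0 * Alast 0 0 + A1 0 1 * Alast 1 0) • coordVec (2 * (2 * h) + 1) (2 * (2 * h))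
          - (2 * Alast 0 0 * Alast 1 0) • coordVec (2 * (2 * h) + 1) 0) := by
  rw [← mul_pow_sub_one (by omega : 2 * h ≠ 0), ← vecMul_vecMul,
    coordVec_last_vecMul_soMat _ _ _ _ (by omega), neg_vecMul, sum_vecMul]
  simp only [smul_vecMul, coordVec_vecMul_soUnitMat_pow A1 Alast hh, Fin.sum_univ_two,
    Fin.rev_zero, Fin.reduceLast, Fin.reduceRev]
  module

lemma soUnitMat_pow_degreeZeroBlock (hh : 2 ≤ h) :
    ((soUnitMat h A1 Alast ^ (2 * h)).toSquareBlockProp fun i => soDegree h i = 0).submatrix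
        (soDegreeZeroEquiv (one_le_two.trans hh)) (soDegreeZeroEquiv (one_le_two.trans hh))
      = (-1 : ℂ) ^ (h - 1) •
        !![A1 0 0 * Alast 0 0 + A1 0 1 * Alast 1 0, -(2 * A1 0 0 * A1 0 1);
          -(2 * Alast 0 0 * Alast 1 0), A1 0 0 * Alast 0 0 + A1 0 1 * Alast 1 0] := by
  have hpos : 2 * (2 * h) ≠ 0 := by omega
  have hzero := (coordVec_val_vecMul (soUnitMat h A1 Alast ^ (2 * h)) 0).symm.trans
    (coordVec_zero_vecMul_soUnitMat_pow A1 Alast hh)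
  have hlast := (coordVec_val_vecMul (soUnitMat h A1 Alast ^ (2 * h)) (Fin.last _)).symm.trans
    (coordVec_last_vecMul_soUnitMat_pow A1 Alast hh)
  ext c d
  fin_cases c <;> fin_cases d <;>
    simp [toSquareBlockProp_def, soDegreeZeroEquiv_zero, soDegreeZeroEquiv_one, hzero, hlast,
      coordVec, hpos, hpos.symm]

lemma charpoly_soUnitMat_pow_degreeZeroBlock (hh : 2 ≤ h) :
    ((soUnitMat h A1 Alast ^ (2 * h)).toSquareBlockProp fun i => soDegree h i = 0).charpoly
      = X ^ 2 + C (2 * (-1) ^ h * (A1 0 0 * Alast 0 0 + A1 0 1 * Alast 1 0)) * X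
          + C ((A1 0 0 * Alast 0 0 - A1 0 1 * Alast 1 0) ^ 2) := by
  have hh1 : 1 ≤ h := one_le_two.trans hh
  have hsign : (-1 : ℂ) ^ h = -(-1) ^ (h - 1) := by
    rw [← mul_pow_sub_one (by omega : h ≠ 0), neg_one_mul]
  have hsign_sq : ((-1 : ℂ) ^ (h - 1)) ^ 2 = 1 := by rw [pow_right_comm, neg_one_sq, one_pow]
  rw [← charpoly_reindex (soDegreeZeroEquiv hh1).symm, reindex_apply, Equiv.symm_symm,
    soUnitMat_pow_degreeZeroBlock A1 Alast hh, charpoly_fin_two, trace_smul, trace_fin_two_of,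
    det_smul, det_fin_two_of, Fintype.card_fin, hsign_sq, hsign, sub_eq_add_neg, ← neg_mul,
    ← C_neg]
  congr 2
  · congr 2
    rw [smul_eq_mul]
    ring
  · ring

theorem charpoly_soUnitMat (hh : 2 ≤ h) :
    (soUnitMat h A1 Alast).charpoly
      = X * (X ^ (2 * (2 * h))
          + C (2 * (-1) ^ h * (A1 0 0 * Alast 0 0 + A1 0 1 * Alast 1 0)) * X ^ (2 * h)
          + C ((A1 0 0 * Alast 0 0 - A1 0 1 * Alast 1 0) ^ 2)) := by
  have : NeZero (2 * h) := ⟨by omega⟩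
  have hgraded := (isHomogeneousMatrix_soMat hh A1 (fun _ => 1) !![1, 0, 0; 0, 0, 1]
    Alast).pow_mul_charpoly
  have hexp : 2 * (2 * h) + 1 - 2 = (2 * h - 1) * 2 + 1 := by omega
  rw [Fintype.card_subtype_compl, card_soDegree_eq_zero (one_le_two.trans hh), Fintype.card_fin,
    charpoly_soUnitMat_pow_degreeZeroBlock A1 Alast hh, hexp, pow_succ, mul_assoc] at hgraded
  rw [mul_left_cancel₀ (pow_ne_zero _ X_ne_zero) hgraded]
  simp [← pow_mul, mul_comm]

end UnitBlocks

end StableGrading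

/-- Let `X = X((a₁ a₂), I₂, …, I₂, I_{2×3}; (b₁, b₂)ᵀ) ∈ M_{2n+1}(ℂ)`. Then
`det(λ·I_{2n+1} − X) = λ·(λ^{2n} + 2·(−1)^{n/2}·(a₁b₁ + a₂b₂)·λⁿ + (a₁b₁ − a₂b₂)²)`. -/
theorem stmt6 (n : ℕ) (hn : 4 ≤ n) (hne : Even n) (a1 a2 b1 b2 : ℂ)
    (X : Matrix (Fin (2 * n + 1)) (Fin (2 * n + 1)) ℂ)
    (hX : X = soMat n !![a1, a2] (fun _ => 1) !![1, 0, 0; 0, 0, 1] !![b1; b2])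
    (lam : ℂ) :
    (lam • (1 : Matrix (Fin (2 * n + 1)) (Fin (2 * n + 1)) ℂ) - X).det
      = lam * (lam ^ (2 * n)
          + 2 * (-1) ^ (n / 2) * (a1 * b1 + a2 * b2) * lam ^ n
          + (a1 * b1 - a2 * b2) ^ 2) := by
  obtain ⟨h, rfl⟩ := hne.two_dvd
  have hhalf : 2 * h / 2 = h := by omega
  rw [smul_one_eq_diagonal, ← scalar_apply, ← eval_charpoly, hX, hhalf,
    charpoly_soUnitMat _ _ (by omega)]
  simp
end
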